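/- Let λ ⊆ ℂ^d × ℂ^d be a positive Lagrangian subspace, let λ₁ = { x ∈ ℂ^d : (x,ξ) ∈ λ for some ξ ∈ ℂ^d } be its projection on the first factor, let k = dim_ℂ λ₁ and N = d − k. Then there exists a symmetric matrix R ∈ ℂ^{d×d} with Im R positive semidefinite such that: if k = d, then λ = { (x, 2Rx) : x ∈ ℂ^d }; and if 0 ≤ k ≤ d−1, then there exists an injective matrix L ∈ ℝ^{d×N} with L^t R = 0 (i.e. the range of the map x ↦ 2Rx is orthogonal to the range of L, meaning the real and imaginary parts of every vector in the range of R are orthogonal in ℝ^d to the range of L) such that λ = { (x, 2Rx + Lθ) : x ∈ ℂ^d, θ ∈ ℂ^N, L^t x = 0 }. -/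

import Mathlib

open Matrix Complex

namespace Stmt2

/-- Bilinear (non-sesquilinear) pairing `⟨u,v⟩ = Σ_j u_j v_j` on `ℂ^d`. -/
noncomputable def pairC {d : ℕ} (u v : Fin d → ℂ) : ℂ := ∑ j, u j * v j

/-- Canonical symplectic form `σ((x,ξ),(x',ξ')) = ⟨x',ξ⟩ − ⟨x,ξ'⟩` on `ℂ^d × ℂ^d`. -/
noncomputable def sform {d : ℕ} (X Y : (Fin d → ℂ) × (Fin d → ℂ)) : ℂ :=
  pairC Y.1 X.2 - pairC X.1 Y.2

/-- A complex subspace `λ ⊆ ℂ^d × ℂ^d` is Lagrangian if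
`λ = { X : σ(X,Y) = 0 for all Y ∈ λ }`. -/
def IsLagrangian {d : ℕ} (lam : Submodule ℂ ((Fin d → ℂ) × (Fin d → ℂ))) : Prop :=
  ∀ X, X ∈ lam ↔ ∀ Y ∈ lam, sform X Y = 0

/-- A Lagrangian is positive if `i σ(X̄, X)` is a nonnegative real number for all `X ∈ λ`. -/
def IsPositive {d : ℕ} (lam : Submodule ℂ ((Fin d → ℂ) × (Fin d → ℂ))) : Prop :=
  ∀ X ∈ lam, ∃ r : ℝ, 0 ≤ r ∧
    Complex.I * sform (fun j => starRingEnd ℂ (X.1 j), fun j => starRingEnd ℂ (X.2 j)) X = r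

lemma mem_map_fst {d : ℕ} (lam : Submodule ℂ ((Fin d → ℂ) × (Fin d → ℂ))) (x : Fin d → ℂ) :
    x ∈ lam.map (LinearMap.fst ℂ (Fin d → ℂ) (Fin d → ℂ)) ↔ ∃ ξ, (x, ξ) ∈ lam := by
  simp [Submodule.mem_map]

lemma memW {d : ℕ} {lam : Submodule ℂ ((Fin d → ℂ) × (Fin d → ℂ))} (hLag : IsLagrangian lam)
    (η : Fin d → ℂ) : ((0 : Fin d → ℂ), η) ∈ lam ↔
      ∀ y ∈ lam.map (LinearMap.fst ℂ (Fin d → ℂ) (Fin d → ℂ)), y ⬝ᵥ η = 0 := by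
  rw [hLag]
  constructor
  · intro h y hy
    obtain ⟨ξ, hξ⟩ := (mem_map_fst lam y).1 hy
    have := h _ hξ
    simpa [sform, pairC, dotProduct] using this
  · intro h Y hY
    have := h Y.1 ((mem_map_fst lam _).2 ⟨Y.2, hY⟩)
    simpa [sform, pairC, dotProduct] using this

lemma symm_of_mem {d : ℕ} {lam : Submodule ℂ ((Fin d → ℂ) × (Fin d → ℂ))}
    (hLag : IsLagrangian lam) {x ξ y η : Fin d → ℂ} (hx : (x, ξ) ∈ lam) (hy : (y, η) ∈ lam) :
    y ⬝ᵥ ξ = x ⬝ᵥ η := by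
  have := (hLag _).1 hx _ hy
  exact sub_eq_zero.1 this

lemma im_nonneg {d : ℕ} {lam : Submodule ℂ ((Fin d → ℂ) × (Fin d → ℂ))}
    (hPos : IsPositive lam) {x ξ : Fin d → ℂ} (hx : (x, ξ) ∈ lam) :
    0 ≤ (star x ⬝ᵥ ξ).im := by
  obtain ⟨r, hr, h⟩ := hPos _ hx
  have h1 : Complex.I * (x ⬝ᵥ star ξ - star x ⬝ᵥ ξ) = r := h
  have h2 : x ⬝ᵥ star ξ = star (star x ⬝ᵥ ξ) := by
    rw [Matrix.star_dotProduct, star_star, dotProduct_comm]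
  rw [h2] at h1
  have := congrArg Complex.re h1
  simp at this
  linarith

lemma star_dot_zero {d : ℕ} {lam : Submodule ℂ ((Fin d → ℂ) × (Fin d → ℂ))}
    (hPos : IsPositive lam) {x ξ η : Fin d → ℂ} (hx : (x, ξ) ∈ lam)
    (hη : ((0 : Fin d → ℂ), η) ∈ lam) : star x ⬝ᵥ η = 0 := by
  by_contra hw
  set w := star x ⬝ᵥ η with hwdef
  have hn : 0 < Complex.normSq w := Complex.normSq_pos.2 hw
  have key : ∀ c : ℝ, 0 ≤ (star x ⬝ᵥ ξ).im - c * Complex.normSq w := by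
    intro c
    have hm : (x, ξ + (-(c : ℂ) * Complex.I * star w) • η) ∈ lam := by
      have := lam.add_mem hx (lam.smul_mem (-(c : ℂ) * Complex.I * star w) hη)
      simpa using this
    have := im_nonneg hPos hm
    rw [dotProduct_add, dotProduct_smul, ← hwdef] at this
    have e : (-(c : ℂ) * Complex.I * star w) • w = ((-c * Complex.normSq w : ℝ) : ℂ) * Complex.I := by
      have : star w * w = (Complex.normSq w : ℂ) := Complex.normSq_eq_conj_mul_self.symm
      rw [smul_eq_mul, mul_assoc, this]; push_cast; ring
    rw [e] at this
    simp at this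
    linarith
  have := key (((star x ⬝ᵥ ξ).im + 1) / Complex.normSq w)
  rw [div_mul_cancel₀ _ hn.ne'] at this
  linarith

/-- double annihilator -/
lemma mem_of_perp {d : ℕ} (V : Submodule ℂ (Fin d → ℂ)) (x : Fin d → ℂ)
    (h : ∀ η : Fin d → ℂ, (∀ y ∈ V, y ⬝ᵥ η = 0) → x ⬝ᵥ η = 0) : x ∈ V := by
  by_contra hx
  obtain ⟨f, hf, hV⟩ := Submodule.exists_le_ker_of_notMem hx
  have e : ∀ y, f y = y ⬝ᵥ (fun j => f (Pi.single j 1)) := by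
    intro y
    rw [LinearMap.pi_apply_eq_sum_univ f y]
    simp only [dotProduct, smul_eq_mul]
    refine Finset.sum_congr rfl fun i _ => ?_
    congr 2
    ext j
    simp [Pi.single_apply, eq_comm]
  apply hf
  rw [e]
  apply h
  intro y hy
  rw [← e]
  exact hV hy

/-- real orthonormal basis matrix -/
lemma exists_L {d : ℕ} (U : Submodule ℝ (Fin d → ℝ)) :
    ∃ (n : ℕ) (L : Matrix (Fin d) (Fin n) ℝ), Lᵀ * L = 1 ∧
      (∀ θ, L.mulVec θ ∈ U) ∧ ∀ u ∈ U, ∃ θ, u = L.mulVec θ := by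
  let U' : Submodule ℝ (EuclideanSpace ℝ (Fin d)) :=
    U.comap (WithLp.linearEquiv 2 ℝ (Fin d → ℝ)).toLinearMap
  let b := stdOrthonormalBasis ℝ U'
  let L : Matrix (Fin d) (Fin (Module.finrank ℝ U')) ℝ :=
    Matrix.of fun i j => (b j : EuclideanSpace ℝ (Fin d)) i
  have hLs : ∀ θ, L.mulVec θ = ∑ j, θ j • (WithLp.ofLp (b j : EuclideanSpace ℝ (Fin d))) := by
    intro θ
    ext i
    simp [L, Matrix.mulVec, dotProduct, mul_comm]
  refine ⟨_, L, ?_, ?_, ?_⟩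
  · ext i j
    have h := b.inner_eq_ite j i
    rw [Submodule.coe_inner, PiLp.inner_apply] at h
    simp only [Matrix.mul_apply, Matrix.transpose_apply, L, Matrix.of_apply, Matrix.one_apply]
    simp only [eq_comm (a := i)]
    rw [← h]
    simp
  · intro θ
    rw [hLs]
    refine U.sum_mem fun j _ => U.smul_mem _ ?_
    exact (b j).2
  · intro u hu
    let u' : U' := ⟨WithLp.toLp 2 u, hu⟩
    refine ⟨fun j => b.repr u' j, ?_⟩
    rw [hLs]
    have := congrArg (fun z : U' => WithLp.ofLp (z : EuclideanSpace ℝ (Fin d))) (b.sum_repr u')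
    simpa [u'] using this.symm

lemma core (d : ℕ)
    (lam : Submodule ℂ ((Fin d → ℂ) × (Fin d → ℂ)))
    (hLag : IsLagrangian lam) (hPos : IsPositive lam) :
    ∃ (n : ℕ), n = d - Module.finrank ℂ
      (lam.map (LinearMap.fst ℂ (Fin d → ℂ) (Fin d → ℂ))) ∧
    ∃ R : Matrix (Fin d) (Fin d) ℂ, R.IsSymm ∧ (R.map Complex.im).PosSemidef ∧
       ∃ L : Matrix (Fin d) (Fin n) ℝ,
          Function.Injective (L.mulVec : (Fin n → ℝ) → (Fin d → ℝ)) ∧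
          (L.map ((↑) : ℝ → ℂ))ᵀ * R = 0 ∧
          ∀ X : (Fin d → ℂ) × (Fin d → ℂ), X ∈ lam ↔
            ((L.map ((↑) : ℝ → ℂ))ᵀ.mulVec X.1 = 0 ∧
             ∃ θ : Fin n → ℂ,
               X.2 = (2 : ℂ) • R.mulVec X.1 + (L.map ((↑) : ℝ → ℂ)).mulVec θ) := by
  set V := lam.map (LinearMap.fst ℂ (Fin d → ℂ) (Fin d → ℂ)) with hV
  have hVW : ∀ x, (∀ η, ((0 : Fin d → ℂ), η) ∈ lam → x ⬝ᵥ η = 0) → x ∈ V := by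
    intro x h
    exact mem_of_perp V x fun η hη => h η ((memW hLag η).2 hη)
  have hVstar : ∀ x ∈ V, star x ∈ V := by
    intro x hx
    obtain ⟨ξ, hξ⟩ := (mem_map_fst lam x).1 hx
    exact hVW _ fun η hη => star_dot_zero hPos hξ hη
  have hWstar : ∀ η, ((0 : Fin d → ℂ), η) ∈ lam → ((0 : Fin d → ℂ), star η) ∈ lam := by
    intro η hη
    rw [memW hLag] at hη ⊢
    intro y hy
    have h1 := hη _ (hVstar y hy)
    have h2 : y ⬝ᵥ star η = star (star y ⬝ᵥ η) := by
      rw [Matrix.star_dotProduct, star_star, dotProduct_comm]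
    rw [h2, h1, star_zero]
  let U : Submodule ℝ (Fin d → ℝ) :=
    { carrier := {u | ((0 : Fin d → ℂ), fun j => (u j : ℂ)) ∈ lam}
      zero_mem' := by
        have : ((0 : Fin d → ℂ), fun j => (((0 : Fin d → ℝ) j : ℝ) : ℂ)) = 0 := by
          ext <;> simp
        show _ ∈ lam
        rw [this]; exact lam.zero_mem
      add_mem' := by
        intro a b ha hb
        have := lam.add_mem ha hb
        show _ ∈ lam
        convert this using 1
        ext <;> simp
      smul_mem' := by
        intro c a ha
        have := lam.smul_mem (c : ℂ) ha
        show _ ∈ lam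
        convert this using 1
        ext <;> simp }
  have memU : ∀ u, u ∈ U ↔ ((0 : Fin d → ℂ), fun j => (u j : ℂ)) ∈ lam := fun u => Iff.rfl
  obtain ⟨n, L, hL1, hL2, hL3⟩ := exists_L U
  set LC : Matrix (Fin d) (Fin n) ℂ := L.map ((↑) : ℝ → ℂ) with hLC
  have hLC1 : LCᵀ * LC = 1 := by
    have := congrArg (fun M : Matrix (Fin n) (Fin n) ℝ => M.map (algebraMap ℝ ℂ)) hL1
    simp only [Matrix.map_mul, ← Matrix.transpose_map] at this
    rw [Matrix.map_one _ (map_zero _) (map_one _)] at this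
    exact this
  have hreal : ∀ θ : Fin n → ℝ,
      LC.mulVec (fun j => (θ j : ℂ)) = fun i => ((L.mulVec θ i : ℝ) : ℂ) := by
    intro θ
    ext i
    simp [LC, Matrix.mulVec, dotProduct]
  have hsplit : ∀ z : Fin n → ℂ, z = (fun j => ((z j).re : ℂ)) + Complex.I • (fun j => ((z j).im : ℂ)) := by
    intro z; ext j; simp [mul_comm Complex.I, Complex.re_add_im]
  -- W = range LC
  have hWL : ∀ θ, ((0 : Fin d → ℂ), LC.mulVec θ) ∈ lam := by
    intro θ
    rw [hsplit θ, Matrix.mulVec_add, Matrix.mulVec_smul, hreal, hreal]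
    have h1 := (memU _).1 (hL2 (fun j => (θ j).re))
    have h2 := (memU _).1 (hL2 (fun j => (θ j).im))
    have := lam.add_mem h1 (lam.smul_mem Complex.I h2)
    simpa using this
  have hWL' : ∀ η, ((0 : Fin d → ℂ), η) ∈ lam → ∃ θ, η = LC.mulVec θ := by
    intro η hη
    have hs := hWstar η hη
    have hre : (fun j => (η j).re) ∈ U := by
      rw [memU]
      have := lam.smul_mem (1/2 : ℂ) (lam.add_mem hη hs)
      convert this using 1
      ext j
      · simp
      · simp [Complex.re_eq_add_conj]; ring
    have him : (fun j => (η j).im) ∈ U := by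
      rw [memU]
      have := lam.smul_mem (1/(2*Complex.I) : ℂ) (lam.sub_mem hη hs)
      convert this using 1
      ext j
      · simp
      · simp [Complex.im_eq_sub_conj]; field_simp
        simp
    obtain ⟨a, ha⟩ := hL3 _ hre
    obtain ⟨b, hb⟩ := hL3 _ him
    refine ⟨(fun j => (a j : ℂ)) + Complex.I • (fun j => (b j : ℂ)), ?_⟩
    rw [Matrix.mulVec_add, Matrix.mulVec_smul, hreal, hreal, ← ha, ← hb]
    ext j; simp [mul_comm Complex.I, Complex.re_add_im]
  have hVL : ∀ x, x ∈ V ↔ LCᵀ.mulVec x = 0 := by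
    intro x
    constructor
    · intro hx
      have : ∀ θ, (LCᵀ.mulVec x) ⬝ᵥ θ = 0 := by
        intro θ
        rw [Matrix.mulVec_transpose, ← Matrix.dotProduct_mulVec]
        exact (memW hLag _).1 (hWL θ) x hx
      exact dotProduct_eq_zero _ this
    · intro hx
      apply hVW
      intro η hη
      obtain ⟨θ, rfl⟩ := hWL' η hη
      rw [Matrix.dotProduct_mulVec, ← Matrix.mulVec_transpose, hx, zero_dotProduct]
  have hn : n = d - Module.finrank ℂ V := by
    have hk : V = LinearMap.ker LCᵀ.mulVecLin := by
      ext x; rw [hVL, LinearMap.mem_ker, Matrix.mulVecLin_apply]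
    have hs : LinearMap.range LCᵀ.mulVecLin = ⊤ := by
      rw [LinearMap.range_eq_top]
      intro y
      refine ⟨LC.mulVec y, ?_⟩
      rw [Matrix.mulVecLin_apply, Matrix.mulVec_mulVec, hLC1, Matrix.one_mulVec]
    have := LinearMap.finrank_range_add_finrank_ker LCᵀ.mulVecLin
    rw [hs, ← hk] at this
    simp at this
    omega
  set P : Matrix (Fin d) (Fin d) ℝ := 1 - L * Lᵀ with hP
  set PC : Matrix (Fin d) (Fin d) ℂ := 1 - LC * LCᵀ with hPC
  have hPCt : PCᵀ = PC := by simp [PC, Matrix.transpose_sub, Matrix.transpose_mul]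
  have hLP : LCᵀ * PC = 0 := by
    simp [PC, Matrix.mul_sub, ← Matrix.mul_assoc, hLC1]
  have hPV : ∀ x, PC.mulVec x ∈ V := by
    intro x
    rw [hVL, Matrix.mulVec_mulVec, hLP, Matrix.zero_mulVec]
  have hPid : ∀ x ∈ V, PC.mulVec x = x := by
    intro x hx
    rw [hVL] at hx
    simp [PC, Matrix.sub_mulVec, ← Matrix.mulVec_mulVec, hx]
  have hPstar : ∀ x : Fin d → ℂ, star (PC.mulVec x) = PC.mulVec (star x) := by
    intro x
    have h : ∀ i j, (starRingEnd ℂ) (PC i j) = PC i j := by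
      intro i j
      simp [PC, Matrix.mul_apply, Matrix.one_apply, LC, apply_ite]
    ext i
    simp [Matrix.mulVec, dotProduct, h]
  choose ξ hξ using fun j : Fin d => (mem_map_fst lam _).1 (hPV (Pi.single j 1))
  let A : Matrix (Fin d) (Fin d) ℂ := Matrix.of fun i j => ξ j i
  have hA : ∀ x, (PC.mulVec x, A.mulVec x) ∈ lam := by
    intro x
    have h := lam.sum_mem (t := Finset.univ) fun j _ => lam.smul_mem (x j) (hξ j)
    convert h using 1
    ext i
    · simp [Prod.fst_sum, Matrix.mulVec, dotProduct, mul_comm]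
    · simp [Prod.snd_sum, Matrix.mulVec, dotProduct, A, mul_comm]
  have hdot : ∀ x y, y ⬝ᵥ (PC * A).mulVec x = PC.mulVec y ⬝ᵥ A.mulVec x := by
    intro x y
    rw [← Matrix.mulVec_mulVec, Matrix.dotProduct_mulVec, ← Matrix.mulVec_transpose, hPCt]
  have hsymm : (PC * A).IsSymm := by
    ext i j
    have h1 := hdot (Pi.single i 1) (Pi.single j 1)
    have h2 := hdot (Pi.single j 1) (Pi.single i 1)
    rw [symm_of_mem hLag (hA _) (hA _), ← h2] at h1
    simpa using h1
  refine ⟨n, hn, (1/2 : ℂ) • (PC * A), ?_, ?_, L, ?_, ?_, ?_⟩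
  · exact hsymm.smul _
  · refine Matrix.PosSemidef.of_dotProduct_mulVec_nonneg ?_ ?_
    · ext i j
      have := congrFun (congrFun (hsymm.smul (1/2 : ℂ)) i) j
      simpa using congrArg Complex.im this
    · intro u
      have h := im_nonneg hPos (hA (fun j => (u j : ℂ)))
      have hu : star (fun j => (u j : ℂ)) = (fun j => (u j : ℂ)) := by ext j; simp
      rw [hPstar, hu, ← hdot] at h
      have e : star u ⬝ᵥ (((1/2 : ℂ) • (PC * A)).map Complex.im).mulVec u
          = 1/2 * ((fun j => (u j : ℂ)) ⬝ᵥ (PC * A).mulVec (fun j => (u j : ℂ))).im := by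
        simp only [dotProduct, Matrix.mulVec, Complex.im_sum, Finset.mul_sum]
        refine Finset.sum_congr rfl fun i _ => ?_
        refine Finset.sum_congr rfl fun j _ => ?_
        have : (1/2 : ℂ) = ((1/2 : ℝ) : ℂ) := by push_cast; rfl
        simp only [Matrix.map_apply, Matrix.smul_apply, smul_eq_mul, this, Complex.im_ofReal_mul]
        simp
        ring
      rw [e]
      positivity
  · intro a b hab
    have := congrArg Lᵀ.mulVec hab
    simpa [Matrix.mulVec_mulVec, hL1] using this
  · rw [Matrix.mul_smul, ← Matrix.mul_assoc, hLP]; simp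
  · rintro ⟨x, η⟩
    have h2 : (2 : ℂ) • ((1/2 : ℂ) • (PC * A)).mulVec x = PC.mulVec (A.mulVec x) := by
      rw [Matrix.smul_mulVec, smul_smul, Matrix.mulVec_mulVec]; norm_num
    have h3 : PC.mulVec (A.mulVec x) = A.mulVec x - LC.mulVec (LCᵀ.mulVec (A.mulVec x)) := by
      rw [hPC, Matrix.sub_mulVec, Matrix.one_mulVec, ← Matrix.mulVec_mulVec _ LC]
    simp only [h2]
    constructor
    · intro hx
      have hxV : x ∈ V := (mem_map_fst lam x).2 ⟨η, hx⟩
      refine ⟨(hVL x).1 hxV, ?_⟩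
      have h := hA x
      rw [hPid x hxV] at h
      have h4 := lam.sub_mem hx h
      rw [Prod.mk_sub_mk, sub_self] at h4
      obtain ⟨θ, hθ⟩ := hWL' _ h4
      refine ⟨θ + LCᵀ.mulVec (A.mulVec x), ?_⟩
      rw [Matrix.mulVec_add, ← hθ, h3]
      abel
    · rintro ⟨hx, θ, hθ⟩
      have hxV := (hVL x).2 hx
      have h := hA x
      rw [hPid x hxV] at h
      have h5 := lam.add_mem h (hWL (θ - LCᵀ.mulVec (A.mulVec x)))
      rw [Prod.mk_add_mk, add_zero, Matrix.mulVec_sub] at h5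
      convert h5 using 2
      rw [hθ, h3]; abel

/-- Proposition: parametrization of positive Lagrangians.  Let
`λ ⊆ ℂ^d × ℂ^d` be a positive Lagrangian, `λ₁` its projection on the first factor,
`k = dim_ℂ λ₁` and `N = d − k`.  Then there is a symmetric `R ∈ ℂ^{d×d}` with `Im R`
positive semidefinite such that: if `k = d` then `λ = { (x, 2Rx) : x ∈ ℂ^d }`; and if
`k ≤ d−1` then there is an injective matrix `L ∈ ℝ^{d×N}` with `Lᵗ R = 0` such that
`λ = { (x, 2Rx + Lθ) : x ∈ ℂ^d, θ ∈ ℂ^N, Lᵗ x = 0 }`. -/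
theorem stmt_2 (d : ℕ)
    (lam : Submodule ℂ ((Fin d → ℂ) × (Fin d → ℂ)))
    (hLag : IsLagrangian lam) (hPos : IsPositive lam)
    (k : ℕ) (hk : k = Module.finrank ℂ
      (lam.map (LinearMap.fst ℂ (Fin d → ℂ) (Fin d → ℂ))))
    (N : ℕ) (hN : N = d - k) :
    ∃ R : Matrix (Fin d) (Fin d) ℂ, R.IsSymm ∧ (R.map Complex.im).PosSemidef ∧
      ((k = d → ∀ X : (Fin d → ℂ) × (Fin d → ℂ),
          X ∈ lam ↔ X.2 = (2 : ℂ) • R.mulVec X.1) ∧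
       (k ≤ d - 1 → ∃ L : Matrix (Fin d) (Fin N) ℝ,
          Function.Injective (L.mulVec : (Fin N → ℝ) → (Fin d → ℝ)) ∧
          (L.map ((↑) : ℝ → ℂ))ᵀ * R = 0 ∧
          ∀ X : (Fin d → ℂ) × (Fin d → ℂ), X ∈ lam ↔
            ((L.map ((↑) : ℝ → ℂ))ᵀ.mulVec X.1 = 0 ∧
             ∃ θ : Fin N → ℂ,
               X.2 = (2 : ℂ) • R.mulVec X.1 + (L.map ((↑) : ℝ → ℂ)).mulVec θ))) := by
  obtain ⟨n, hn, R, hR, hI, L, hL1, hL2, hL3⟩ := core d lam hLag hPos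
  rw [← hk, ← hN] at hn
  subst hn
  refine ⟨R, hR, hI, ?_, fun _ => ⟨L, hL1, hL2, hL3⟩⟩
  intro hkd X
  have h0 : n = 0 := by omega
  subst h0
  rw [hL3]
  simp [Matrix.mulVec_eq_sum, eq_iff_true_of_subsingleton]

end Stmt2
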